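/- arXiv:1004.3550 — 2 statements merged into one kernel-verified Lean document; each statement's English description precedes it below -/
import Mathlib

section
/- Let p > 3 be an odd prime and let i, j, k be nonzero elements of ℤ/pℤ. Then ∑_{l ∈ (ℤ/pℤ)ˣ} c(i, l·j, l·k) = p − 2 if j = k, and ∑_{l ∈ (ℤ/pℤ)ˣ} c(i, l·j, l·k) = p − 3 if j ≠ k. -/
open scoped BigOperators

/-!
Substituting `l = i * m⁻¹` and dropping the square factor `(i * m⁻¹) ^ 2` turns the quadratic
form at `(i, l * j, l * k)` into `(m - (j + k)) ^ 2 - 4 * j * k`. Since `4 * j * k ≠ 0`, the sum of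
`χ (x ^ 2 - D)` over the whole field is `-1`, which comes from counting the `p - 1` points of the
hyperbola `x ^ 2 - y ^ 2 = D` (`sum_quadraticChar_sq_sub`). The term at `m = 0`, which is absent
from the sum over units, is `χ ((j - k) ^ 2)`, equal to `0` or `1` according to whether `j = k`.
-/

/-- `c(a,b,c) = 1 + χ_p(a² + b² + c² − 2ab − 2bc − 2ca)` where `χ_p` is the quadratic
character of `ℤ/pℤ`. -/
noncomputable def cc (p : ℕ) [Fact p.Prime] (a b c : ZMod p) : ℤ :=
  1 + quadraticChar (ZMod p) (a ^ 2 + b ^ 2 + c ^ 2 - 2 * a * b - 2 * b * c - 2 * c * a)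

/-- The hyperbola `x ^ 2 - y ^ 2 = D` is parametrised by `u = x + y`, so it has as many points as
there are units; its fibre over `x` has `1 + χ (x ^ 2 - D)` points. -/
lemma sum_quadraticChar_sq_sub {F : Type*} [Field F] [Fintype F] [DecidableEq F]
    (hF : ringChar F ≠ 2) (D : F) (hD : D ≠ 0) :
    ∑ x : F, quadraticChar F (x ^ 2 - D) = -1 := by
  have h2 : (2 : F) ≠ 0 := Ring.two_ne_zero hF
  have hcount : ∑ x : F, (quadraticChar F (x ^ 2 - D) + 1) = (Fintype.card Fˣ : ℤ) := by
    have hfib (x : F) : quadraticChar F (x ^ 2 - D) + 1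
        = ((Finset.univ.filter fun y : F => y ^ 2 = x ^ 2 - D).card : ℤ) := by
      rw [← quadraticChar_card_sqrts hF]
      congr 2
      ext y
      simp
    simp_rw [hfib]
    rw [← Nat.cast_sum, ← Finset.card_sigma, ← Finset.card_univ]
    congr 1
    symm
    refine Finset.card_bij
      (fun (u : Fˣ) _ => ⟨((u : F) + D / u) / 2, ((u : F) - D / u) / 2⟩) ?_ ?_ ?_
    · intro u _
      have hu := u.ne_zero
      simp only [Finset.mem_sigma, Finset.mem_univ, Finset.mem_filter, true_and]
      field_simp
      ring
    · intro u _ v _ h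
      simp only [Sigma.mk.injEq, heq_eq_eq] at h
      obtain ⟨h₁, h₂⟩ := h
      ext
      have key (w : F) : w = (w + D / w) / 2 + (w - D / w) / 2 := by
        linear_combination (-w) * mul_inv_cancel₀ h2
      rw [key u, key v, h₁, h₂]
    · rintro ⟨x, y⟩ h
      simp only [Finset.mem_sigma, Finset.mem_univ, Finset.mem_filter, true_and] at h
      have hmul : D = (x + y) * (x - y) := by linear_combination h
      have hxy : x + y ≠ 0 := by
        intro h0
        exact hD (by rw [hmul, h0, zero_mul])
      have hdiv : D / (x + y) = x - y := by rw [hmul, mul_div_cancel_left₀ _ hxy]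
      refine ⟨Units.mk0 _ hxy, Finset.mem_univ _, ?_⟩
      simp only [Units.val_mk0, hdiv, Sigma.mk.injEq, heq_eq_eq]
      constructor <;> field_simp <;> ring
  rw [Finset.sum_add_distrib, Fintype.card_units, Nat.cast_sub Fintype.card_pos] at hcount
  simp only [Finset.sum_const, Finset.card_univ, nsmul_eq_mul, mul_one, Nat.cast_one] at hcount
  linarith

lemma sum_units_eq_sub {F : Type*} [Field F] [Fintype F] [DecidableEq F] (f : F → ℤ) :
    ∑ u : Fˣ, f u = ∑ x : F, f x - f 0 := by
  rw [← Finset.sum_erase_eq_sub (Finset.mem_univ _)]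
  refine Finset.sum_bij (fun u _ => (u : F)) (by simp) (fun u _ v _ h => Units.ext h) ?_
    (by simp)
  intro x hx
  exact ⟨Units.mk0 x (Finset.ne_of_mem_erase hx), Finset.mem_univ _, rfl⟩

/-- For an odd prime `p > 3` and nonzero `i, j, k ∈ ℤ/pℤ`,
`∑_{l ∈ (ℤ/pℤ)ˣ} c(i, l·j, l·k)` equals `p − 2` if `j = k` and `p − 3` if `j ≠ k`. -/
theorem stmt5 (p : ℕ) [Fact p.Prime] (hp : 3 < p) (i j k : ZMod p)
    (hi : i ≠ 0) (hj : j ≠ 0) (hk : k ≠ 0) :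
    (∑ l : (ZMod p)ˣ, cc p i ((l : ZMod p) * j) ((l : ZMod p) * k))
      = if j = k then (p : ℤ) - 2 else (p : ℤ) - 3 := by
  have hF : ringChar (ZMod p) ≠ 2 := by
    rw [ZMod.ringChar_zmod_n]
    lia
  have h2 : (2 : ZMod p) ≠ 0 := Ring.two_ne_zero hF
  have hD : 4 * j * k ≠ 0 := by
    have : (4 : ZMod p) = 2 * 2 := by norm_num
    rw [this]
    simp [h2, hj, hk]
  have hterm (m : (ZMod p)ˣ) :
      cc p i (((Units.mk0 i hi * m⁻¹ : (ZMod p)ˣ) : ZMod p) * j)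
        (((Units.mk0 i hi * m⁻¹ : (ZMod p)ˣ) : ZMod p) * k)
      = 1 + quadraticChar (ZMod p) (((m : ZMod p) - (j + k)) ^ 2 - 4 * j * k) := by
    have hm := m.ne_zero
    have hne : i * (m : ZMod p)⁻¹ ≠ 0 := mul_ne_zero hi (inv_ne_zero hm)
    rw [cc, ← one_mul (quadraticChar (ZMod p) (((m : ZMod p) - (j + k)) ^ 2 - 4 * j * k)),
      ← quadraticChar_sq_one' hne, ← map_mul]
    congr 2
    simp only [Units.val_mul, Units.val_mk0, Units.val_inv_eq_inv_val]
    field_simp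
    ring
  have hshift : ∑ m : ZMod p, quadraticChar (ZMod p) ((m - (j + k)) ^ 2 - 4 * j * k) = -1 :=
    (Equiv.sum_comp (Equiv.subRight (j + k))
      (fun x : ZMod p => quadraticChar (ZMod p) (x ^ 2 - 4 * j * k))).trans
      (sum_quadraticChar_sq_sub hF _ hD)
  rw [← Equiv.sum_comp ((Equiv.inv (ZMod p)ˣ).trans (Equiv.mulLeft (Units.mk0 i hi)))]
  simp only [Equiv.trans_apply, Equiv.inv_apply, Equiv.coe_mulLeft, hterm]
  rw [sum_units_eq_sub
    (fun m : ZMod p => 1 + quadraticChar (ZMod p) ((m - (j + k)) ^ 2 - 4 * j * k)),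
    Finset.sum_add_distrib, hshift]
  have h0 : (0 - (j + k)) ^ 2 - 4 * j * k = (j - k) ^ 2 := by ring
  rw [h0]
  simp only [Finset.sum_const, Finset.card_univ, ZMod.card, nsmul_eq_mul, mul_one]
  split_ifs with h
  · simp [h]
    ring
  · rw [quadraticChar_sq_one' (sub_ne_zero.mpr h)]
    ring
end

section
/- Let p > 3 be an odd prime. Then ∑_{u=0}^{p−1} K(u)³ = p² + 2p if p ≡ 1 (mod 3), and ∑_{u=0}^{p−1} K(u)³ = −p² + 2p if p ≡ 2 (mod 3), where the sum is over a complete set of residues u modulo p. (Equivalently, ∑_{u=0}^{p−1} K(u)³ = ((−3)/p)·p² + 2p, where ((−3)/p) is the Legendre symbol.) -/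
/-!
Write `ψ` for the standard additive character of `ℤ/pℤ`. Expanding the cube gives a sum over `u` and
over units `x, y, z` of `ψ (x + y + z + u (x⁻¹ + y⁻¹ + z⁻¹))`. The substitution `x = z a`, `y = z b`
turns the summand into `ψ (z S + u z⁻¹ T)` with `S = a + b + 1` and `T = a⁻¹ + b⁻¹ + 1`.
Orthogonality in `u` contributes `p · [T = 0]`, and then summing over units `z` contributes
`p · [S = 0] - 1`. Hence the moment equals `p² · #{T = S = 0} - p · #{T = 0}`.

The second count is `p - 2`: every `a ≠ -1` admits exactly one `b`. In the first count `b = a⁻¹` is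
forced and `a² + a + 1 = 0`, so it is the number of primitive cube roots of unity modulo `p`, which is
`2` or `0` according to `p` modulo `3`.
-/

open scoped BigOperators

/-- The classical Kloosterman sum `K(u) = ∑_{x ∈ (ℤ/pℤ)ˣ} exp(2πi(x + u·x⁻¹)/p)`. -/
noncomputable def K (p : ℕ) [Fact p.Prime] (u : ZMod p) : ℂ :=
  ∑ x : (ZMod p)ˣ,
    Complex.exp (2 * Real.pi * Complex.I *
      ((((x : ZMod p) + u * ((x⁻¹ : (ZMod p)ˣ) : ZMod p)).val : ℕ) : ℂ) / p)

section Moment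

variable {p : ℕ} [Fact p.Prime]

lemma K_eq_stdAddChar (u : ZMod p) :
    K p u = ∑ x : (ZMod p)ˣ, ZMod.stdAddChar ((x : ZMod p) + u * ((x⁻¹ : (ZMod p)ˣ) : ZMod p)) := by
  unfold K
  refine Finset.sum_congr rfl fun x _ => ?_
  rw [ZMod.stdAddChar_apply, ZMod.toCircle_apply]

lemma sum_stdAddChar_mul (t : ZMod p) :
    ∑ u : ZMod p, ZMod.stdAddChar (u * t) = if t = 0 then (p : ℂ) else 0 := by
  have h := AddChar.sum_mulShift t (ZMod.isPrimitive_stdAddChar p)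
  rw [ZMod.card] at h
  rw [h]
  split_ifs <;> simp

lemma sum_units_stdAddChar_mul (s : ZMod p) :
    ∑ z : (ZMod p)ˣ, ZMod.stdAddChar ((z : ZMod p) * s) = (if s = 0 then (p : ℂ) else 0) - 1 := by
  rw [← sum_stdAddChar_mul s, eq_sub_iff_add_eq]
  rw [← Finset.sum_erase_add (Finset.univ : Finset (ZMod p)) _ (Finset.mem_univ 0)]
  rw [zero_mul, AddChar.map_zero_eq_one]
  congr 1
  refine Finset.sum_bij (fun z _ => (z : ZMod p)) ?_ ?_ ?_ ?_
  · intro z _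
    simp
  · intro a _ b _ h
    exact Units.ext h
  · intro b hb
    exact ⟨Units.mk0 b (Finset.ne_of_mem_erase hb), Finset.mem_univ _, rfl⟩
  · intro z _
    rfl

/-- The third moment after the substitution `x = z a`, `y = z b` and orthogonality in `u`
and `z`. -/
lemma sum_K_cube :
    ∑ u : ZMod p, (K p u) ^ 3 =
      ∑ a : (ZMod p)ˣ, ∑ b : (ZMod p)ˣ,
        (if ((a⁻¹ : (ZMod p)ˣ) : ZMod p) + ((b⁻¹ : (ZMod p)ˣ) : ZMod p) + 1 = 0
          then (p : ℂ) else 0) *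
        ((if (a : ZMod p) + b + 1 = 0 then (p : ℂ) else 0) - 1) := by
  have cube : ∀ u : ZMod p, (K p u) ^ 3 =
      ∑ z : (ZMod p)ˣ, ∑ a : (ZMod p)ˣ, ∑ b : (ZMod p)ˣ,
        ZMod.stdAddChar ((z : ZMod p) * ((a : ZMod p) + (b : ZMod p) + 1)) *
        ZMod.stdAddChar (u * (((z⁻¹ : (ZMod p)ˣ) : ZMod p) *
          (((a⁻¹ : (ZMod p)ˣ) : ZMod p) + ((b⁻¹ : (ZMod p)ˣ) : ZMod p) + 1))) := by
    intro u
    have shift : ∀ z : (ZMod p)ˣ, K p u = ∑ a : (ZMod p)ˣ, ZMod.stdAddChar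
        (((z * a : (ZMod p)ˣ) : ZMod p) + u * (((z * a)⁻¹ : (ZMod p)ˣ) : ZMod p)) := by
      intro z
      rw [K_eq_stdAddChar]
      exact (Equiv.sum_comp (Equiv.mulLeft z) (fun x : (ZMod p)ˣ =>
        (ZMod.stdAddChar ((x : ZMod p) + u * ((x⁻¹ : (ZMod p)ˣ) : ZMod p)) : ℂ))).symm
    rw [pow_succ', pow_two]
    nth_rewrite 1 [K_eq_stdAddChar]
    rw [Finset.sum_mul]
    refine Finset.sum_congr rfl fun z _ => ?_
    rw [shift z, Finset.sum_mul_sum, Finset.mul_sum]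
    refine Finset.sum_congr rfl fun a _ => ?_
    rw [Finset.mul_sum]
    refine Finset.sum_congr rfl fun b _ => ?_
    rw [← AddChar.map_add_eq_mul, ← AddChar.map_add_eq_mul, ← AddChar.map_add_eq_mul]
    congr 1
    simp only [mul_inv, Units.val_mul]
    ring
  simp_rw [cube]
  rw [Finset.sum_comm]
  have inner : ∀ z : (ZMod p)ˣ, (∑ u : ZMod p, ∑ a : (ZMod p)ˣ, ∑ b : (ZMod p)ˣ,
        ZMod.stdAddChar ((z : ZMod p) * ((a : ZMod p) + (b : ZMod p) + 1)) *
        ZMod.stdAddChar (u * (((z⁻¹ : (ZMod p)ˣ) : ZMod p) *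
          (((a⁻¹ : (ZMod p)ˣ) : ZMod p) + ((b⁻¹ : (ZMod p)ˣ) : ZMod p) + 1)))) =
      ∑ a : (ZMod p)ˣ, ∑ b : (ZMod p)ˣ,
        (if ((a⁻¹ : (ZMod p)ˣ) : ZMod p) + ((b⁻¹ : (ZMod p)ˣ) : ZMod p) + 1 = 0
          then (p : ℂ) else 0) *
        ZMod.stdAddChar ((z : ZMod p) * ((a : ZMod p) + (b : ZMod p) + 1)) := by
    intro z
    rw [Finset.sum_comm]
    refine Finset.sum_congr rfl fun a _ => ?_
    rw [Finset.sum_comm]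
    refine Finset.sum_congr rfl fun b _ => ?_
    rw [← Finset.mul_sum, sum_stdAddChar_mul, mul_comm]
    simp only [Units.mul_right_eq_zero]
  simp_rw [inner]
  rw [Finset.sum_comm]
  refine Finset.sum_congr rfl fun a _ => ?_
  rw [Finset.sum_comm]
  refine Finset.sum_congr rfl fun b _ => ?_
  rw [← Finset.mul_sum, sum_units_stdAddChar_mul]

/-- For fixed `a`, the equation `a⁻¹ + b⁻¹ + 1 = 0` has one unit solution `b`, except that it has
none for `a = -1`. -/
lemma sum_indicator_inv (a : (ZMod p)ˣ) :
    ∑ b : (ZMod p)ˣ, (if ((a⁻¹ : (ZMod p)ˣ) : ZMod p) + ((b⁻¹ : (ZMod p)ˣ) : ZMod p) + 1 = 0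
      then (1 : ℂ) else 0) = 1 - if a = -1 then 1 else 0 := by
  by_cases ha : a = -1
  · rw [if_pos ha, sub_self]
    refine Finset.sum_eq_zero fun b _ => if_neg fun h => ?_
    have h1 : ((a⁻¹ : (ZMod p)ˣ) : ZMod p) = -1 := by
      rw [ha, inv_neg_one, Units.val_neg, Units.val_one]
    exact (b⁻¹).ne_zero (by linear_combination h - h1)
  · have hc : -(((a⁻¹ : (ZMod p)ˣ) : ZMod p) + 1) ≠ 0 := by
      intro h
      apply ha
      have h1 : ((a⁻¹ : (ZMod p)ˣ) : ZMod p) = -1 := by linear_combination -h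
      have h2 : a⁻¹ = -1 := Units.ext (by rw [h1, Units.val_neg, Units.val_one])
      rw [← inv_inv a, h2, inv_neg_one]
    have key : ∀ b : (ZMod p)ˣ,
        (((a⁻¹ : (ZMod p)ˣ) : ZMod p) + ((b⁻¹ : (ZMod p)ˣ) : ZMod p) + 1 = 0) ↔
          b = (Units.mk0 _ hc)⁻¹ := by
      intro b
      rw [← inv_eq_iff_eq_inv, Units.ext_iff, Units.val_mk0]
      constructor <;> intro h <;> linear_combination h
    simp_rw [key]
    rw [Finset.sum_ite_eq', if_pos (Finset.mem_univ _), if_neg ha, sub_zero]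

/-- For fixed `a`, the two conditions have a common solution `b` (namely `b = a⁻¹`) exactly when
`a² + a + 1 = 0`. -/
lemma sum_indicator_both (a : (ZMod p)ˣ) :
    ∑ b : (ZMod p)ˣ, (if ((a⁻¹ : (ZMod p)ˣ) : ZMod p) + ((b⁻¹ : (ZMod p)ˣ) : ZMod p) + 1 = 0
      then (1 : ℂ) else 0) * (if (a : ZMod p) + b + 1 = 0 then (1 : ℂ) else 0) =
      if (a : ZMod p) ^ 2 + a + 1 = 0 then 1 else 0 := by
  have key : ∀ b : (ZMod p)ˣ,
      (((a⁻¹ : (ZMod p)ˣ) : ZMod p) + ((b⁻¹ : (ZMod p)ˣ) : ZMod p) + 1 = 0 ∧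
        (a : ZMod p) + b + 1 = 0) ↔ (b = a⁻¹ ∧ (a : ZMod p) ^ 2 + a + 1 = 0) := by
    intro b
    have haa : (a : ZMod p) * ((a⁻¹ : (ZMod p)ˣ) : ZMod p) = 1 := a.mul_inv
    have hbb : (b : ZMod p) * ((b⁻¹ : (ZMod p)ˣ) : ZMod p) = 1 := b.mul_inv
    constructor
    · rintro ⟨hT, hS⟩
      have hab : (a : ZMod p) * b = 1 := by
        linear_combination (a : ZMod p) * b * hT - b * haa - a * hbb - hS
      refine ⟨eq_inv_of_mul_eq_one_right (Units.ext (by simpa using hab)), ?_⟩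
      linear_combination (a : ZMod p) * hS - hab
    · rintro ⟨rfl, h⟩
      rw [inv_inv]
      constructor
      · linear_combination ((a⁻¹ : (ZMod p)ˣ) : ZMod p) * h - ((a : ZMod p) + 1) * haa
      · linear_combination ((a⁻¹ : (ZMod p)ˣ) : ZMod p) * h - ((a : ZMod p) + 1) * haa
  simp_rw [ite_zero_mul_ite_zero, mul_one, key]
  by_cases h : (a : ZMod p) ^ 2 + a + 1 = 0 <;> simp [h]

/-- The third moment in terms of the number of roots of `X² + X + 1` modulo `p`. -/
lemma sum_K_cube_eq :
    ∑ u : ZMod p, (K p u) ^ 3 =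
      (p : ℂ) ^ 2 * (∑ a : (ZMod p)ˣ, if (a : ZMod p) ^ 2 + a + 1 = 0 then 1 else 0)
        - (p : ℂ) * (p - 2) := by
  have hcard : (Fintype.card (ZMod p)ˣ : ℂ) = p - 1 := by
    rw [ZMod.card_units, Nat.cast_sub (Fact.out : p.Prime).one_le, Nat.cast_one]
  have hT : ∑ a : (ZMod p)ˣ, ∑ b : (ZMod p)ˣ,
      (if ((a⁻¹ : (ZMod p)ˣ) : ZMod p) + ((b⁻¹ : (ZMod p)ˣ) : ZMod p) + 1 = 0
        then (1 : ℂ) else 0) = p - 2 := by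
    simp_rw [sum_indicator_inv]
    rw [Finset.sum_sub_distrib]
    simp only [Finset.sum_const, Finset.card_univ, nsmul_eq_mul, hcard, Finset.sum_ite_eq',
      Finset.mem_univ, if_true]
    ring
  rw [sum_K_cube, ← hT]
  simp_rw [← sum_indicator_both, Finset.mul_sum, ← Finset.sum_sub_distrib]
  refine Finset.sum_congr rfl fun a _ => Finset.sum_congr rfl fun b _ => ?_
  split_ifs <;> ring

lemma sum_roots_of_mod_three_eq_two (hp : 3 < p) (h : p % 3 = 2) :
    (∑ a : (ZMod p)ˣ, if (a : ZMod p) ^ 2 + a + 1 = 0 then (1 : ℂ) else 0) = 0 := by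
  refine Finset.sum_eq_zero fun a _ => if_neg fun ha => ?_
  have h3 : a ^ 3 = 1 := Units.ext (by
    push_cast
    linear_combination ((a : ZMod p) - 1) * ha)
  have hcop : Nat.Coprime 3 (p - 1) :=
    (Nat.Prime.coprime_iff_not_dvd Nat.prime_three).2 (by omega)
  have h1 : a = 1 := by
    have := Nat.dvd_gcd (orderOf_dvd_of_pow_eq_one h3)
      (orderOf_dvd_of_pow_eq_one (ZMod.units_pow_card_sub_one_eq_one p a))
    rw [hcop.gcd_eq_one, Nat.dvd_one, orderOf_eq_one_iff] at this
    exact this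
  have h0 : ((3 : ℕ) : ZMod p) = 0 := by
    rw [h1] at ha
    push_cast at ha ⊢
    linear_combination ha
  rw [ZMod.natCast_eq_zero_iff] at h0
  exact absurd (Nat.le_of_dvd (by norm_num) h0) (by omega)

lemma sum_roots_of_mod_three_eq_one (h : p % 3 = 1) :
    (∑ a : (ZMod p)ˣ, if (a : ZMod p) ^ 2 + a + 1 = 0 then (1 : ℂ) else 0) = 2 := by
  have : Fact (Nat.Prime 3) := ⟨Nat.prime_three⟩
  obtain ⟨w, hw⟩ := exists_prime_orderOf_dvd_card (G := (ZMod p)ˣ) 3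
    (by rw [ZMod.card_units]; omega)
  have hw1 : w ≠ 1 := by
    rintro rfl
    simp at hw
  have hw3 : (w : ZMod p) ^ 3 = 1 := by
    have := pow_orderOf_eq_one w
    rw [hw] at this
    simpa using congrArg Units.val this
  have hroot : (w : ZMod p) ^ 2 + w + 1 = 0 := by
    have hne : (w : ZMod p) - 1 ≠ 0 := fun h0 => hw1 (Units.ext (by simpa using sub_eq_zero.1 h0))
    refine (mul_eq_zero.1 (?_ : ((w : ZMod p) - 1) * _ = 0)).resolve_left hne
    linear_combination hw3
  have hne : w ≠ w ^ 2 := by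
    intro e
    apply hw1
    rw [pow_two] at e
    exact (left_eq_mul.1 e)
  have hset : (Finset.univ.filter fun a : (ZMod p)ˣ => (a : ZMod p) ^ 2 + a + 1 = 0) =
      {w, w ^ 2} := by
    ext a
    simp only [Finset.mem_filter, Finset.mem_univ, true_and, Finset.mem_insert,
      Finset.mem_singleton]
    -- `X² + X + 1 = (X - w) (X - w²)`
    have hfac : (a : ZMod p) ^ 2 + a + 1 = ((a : ZMod p) - w) * ((a : ZMod p) - w ^ 2) := by
      linear_combination (a : ZMod p) * hroot - hw3
    rw [hfac, mul_eq_zero, sub_eq_zero, sub_eq_zero, Units.ext_iff, Units.ext_iff,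
      Units.val_pow_eq_pow_val]
  rw [Finset.sum_boole, hset, Finset.card_pair hne, Nat.cast_ofNat]

end Moment

/-- For an odd prime `p > 3`, `∑_{u=0}^{p−1} K(u)³ = p² + 2p`
if `p ≡ 1 (mod 3)` and `∑_{u=0}^{p−1} K(u)³ = −p² + 2p` if `p ≡ 2 (mod 3)`. -/
theorem stmt12 (p : ℕ) [Fact p.Prime] (hp : 3 < p) :
    (p % 3 = 1 → ∑ u : ZMod p, (K p u) ^ 3 = (p : ℂ) ^ 2 + 2 * (p : ℂ)) ∧
    (p % 3 = 2 → ∑ u : ZMod p, (K p u) ^ 3 = -(p : ℂ) ^ 2 + 2 * (p : ℂ)) := by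
  constructor <;> intro h <;> rw [sum_K_cube_eq]
  · rw [sum_roots_of_mod_three_eq_one h]
    ring
  · rw [sum_roots_of_mod_three_eq_two hp h]
    ring
end
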